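/- Let T(h) be the SR procedure. (i) Assume there exists I ∈ (0,∞) such that for all ε > 0: lim_{M→∞} P_0(max_{1≤n≤M} Z_n^0 ≥ I(1+ε)M) = 0, and for some r ≥ 1, Σ_{n≥1} n^{r−1} sup_{ν≥0} P_ν(Z_{ν+n}^ν/n < I − ε) < ∞. Then limsup_{h→∞} E_ν[((T(h)−ν)^+)^r]/(log h)^r ≤ 1/I^r for all ν ≥ 0, limsup_{h→∞} E_ν[(T(h)−ν)^r | T(h)>ν]/(log h)^r ≤ 1/I^r for all ν ≥ 0, and lim_{h→∞} sup_{ν≥0} E_ν[((T(h)−ν)^+)^r]/(log h)^r = 1/I^r. (ii) These three asymptotic relations hold if for all ε > 0, Σ_{n≥1} n^{r−1} sup_{ν≥0} P_ν(|Z_{ν+n}^ν/n − I| > ε) < ∞. (iii) In particular, for r = 1 they hold under condition (A2). -/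

import Mathlib

/-!
Upper bounds. As `R_{ν+n} ≥ exp Z_{ν+n}^ν`, the event `T(h) - ν > n` forces `Z_{ν+n}^ν < log h`.
Fix `a < I`; for `n ≥ log h / a` this gives `Z_{ν+n}^ν / n < a`. Summing the increments
`(n+1)^r - n^r = O(n^(r-1))` over these tails yields
`E_ν[((T(h) - ν)⁺)^r] ≤ (log h / a + 1)^r + C(a)` with `C(a) < ∞` independent of `ν` and `h`.
Divide by `(log h)^r`, let `h → ∞` and then `a ↑ I`. The conditional risks obey the same bound
because `P_ν(T(h) ≤ ν) = P_∞(T(h) ≤ ν) → 0` as `h → ∞`.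

Lower bound. It is attained at `ν = 0`, where it suffices that `P_0(T(h) ≤ m) → 0` for
`m = ⌊log h / a⌋` and every `a > I`. With `I < c < a`, a change of measure on `F_m` gives
`P_0(T(h) ≤ m) ≤ P_0(Z_m^0 ≥ c m) + exp(c m) P_∞(T(h) ≤ m)`. The first term vanishes by the growth
condition on `Z_m^0`. Since `E_∞ R_n ≤ n`, Markov's inequality and a union bound give
`P_∞(T(h) ≤ m) ≤ m² / h`, so the second term is at most `m² h^(c/a - 1)` and vanishes too.
-/

open MeasureTheory Filter Set Topology ENNReal

noncomputable section

/-- A general change-point model: a filtration `F` on `Ω`, probability measures `P k`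
(the change occurs immediately after time `k`) and `Pinf` (no change), such that `P k`
and `Pinf` agree on `F n` for `n ≤ k` and are mutually absolutely continuous
on `F n` for `n > k`. -/
structure ChangePointModel (Ω : Type) [m0 : MeasurableSpace Ω] where
  F : ℕ → MeasurableSpace Ω
  F_le : ∀ n, F n ≤ m0
  F_mono : Monotone F
  F_zero : F 0 = ⊥
  P : ℕ → Measure Ω
  Pinf : Measure Ω
  P_prob : ∀ k, IsProbabilityMeasure (P k)
  Pinf_prob : IsProbabilityMeasure Pinf
  agree : ∀ k n : ℕ, n ≤ k → (P k).trim (F_le n) = Pinf.trim (F_le n)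
  ac₁ : ∀ k n : ℕ, k < n → (P k).trim (F_le n) ≪ Pinf.trim (F_le n)
  ac₂ : ∀ k n : ℕ, k < n → Pinf.trim (F_le n) ≪ (P k).trim (F_le n)

namespace ChangePointModel

variable {Ω : Type} [m0 : MeasurableSpace Ω] (M : ChangePointModel Ω)

/-- The log-likelihood ratio `Z n k = log (d(P k|F n)/d(P∞|F n))`. -/
def Z (n k : ℕ) (ω : Ω) : ℝ :=
  Real.log ((((M.P k).trim (M.F_le n)).rnDeriv (M.Pinf.trim (M.F_le n))) ω).toReal

/-- A detection procedure: a stopping time of the filtration `F` with values in `{1,2,…,∞}`. -/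
def IsDetection (τ : Ω → ℕ∞) : Prop :=
  (∀ ω, 1 ≤ τ ω) ∧ ∀ n : ℕ, MeasurableSet[M.F n] {ω | τ ω ≤ (n : ℕ∞)}

/-- The detection risk `R_ν(τ) = E_ν (τ - ν)⁺`. -/
def risk (ν : ℕ) (τ : Ω → ℕ∞) : ℝ≥0∞ :=
  ∫⁻ ω, ((τ ω - (ν : ℕ∞) : ℕ∞) : ℝ≥0∞) ∂(M.P ν)

/-- The conditional detection risk `R*_ν(τ) = E_ν (τ - ν | τ > ν)`. -/
def crisk (ν : ℕ) (τ : Ω → ℕ∞) : ℝ≥0∞ :=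
  M.risk ν τ / M.P ν {ω | (ν : ℕ∞) < τ ω}

/-- The moment-`ℓ` detection risk `E_ν ((τ - ν)⁺)^ℓ`. -/
def riskPow (ℓ : ℝ) (ν : ℕ) (τ : Ω → ℕ∞) : ℝ≥0∞ :=
  ∫⁻ ω, ((τ ω - (ν : ℕ∞) : ℕ∞) : ℝ≥0∞) ^ ℓ ∂(M.P ν)

/-- The conditional moment-`ℓ` detection risk `E_ν ((τ - ν)^ℓ | τ > ν)`. -/
def criskPow (ℓ : ℝ) (ν : ℕ) (τ : Ω → ℕ∞) : ℝ≥0∞ :=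
  M.riskPow ℓ ν τ / M.P ν {ω | (ν : ℕ∞) < τ ω}

/-- The Bayesian class `Δ(α,ϱ)` of detection procedures with weighted probability of
false alarm at most `α` (geometric prior with parameter `ϱ`). -/
def Delta (α ϱ : ℝ) : Set (Ω → ℕ∞) :=
  {τ | M.IsDetection τ ∧
    ∑' k : ℕ, ENNReal.ofReal (ϱ * (1 - ϱ) ^ k) * M.Pinf {ω | τ ω ≤ (k : ℕ∞)}
      ≤ ENNReal.ofReal α}

/-- The Shiryaev–Roberts statistic `R_n = ∑_{k=1}^n exp (Z_n^{k-1})`. -/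
def SRstat (n : ℕ) (ω : Ω) : ℝ :=
  ∑ k ∈ Finset.range n, Real.exp (M.Z n k ω)

/-- The Shiryaev–Roberts procedure with threshold `h`. -/
def SR (h : ℝ) (ω : Ω) : ℕ∞ :=
  sInf {n : ℕ∞ | ∃ m : ℕ, n = (m : ℕ∞) ∧ 1 ≤ m ∧ h ≤ M.SRstat m ω}

/-- Condition (A1): `Z (k+n) k / n → I` almost surely under `P k`, for every `k`. -/
def CondA1 (I : ℝ) : Prop :=
  ∀ k : ℕ, ∀ᵐ ω ∂(M.P k),
    Tendsto (fun n : ℕ => M.Z (k + n) k ω / n) atTop (𝓝 I)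

/-- Condition (A2): uniform complete convergence of `Z (k+n) k / n` to `I`. -/
def CondA2 (I : ℝ) : Prop :=
  ∀ ε : ℝ, 0 < ε →
    (∑' n : ℕ, ⨆ k : ℕ,
      M.P k {ω | ε < |M.Z (k + (n + 1)) k ω / (n + 1) - I|}) < ⊤

/-- Uniform `r`-complete convergence of `Z (k+n) k / n` to `I`. -/
def CondAr (r I : ℝ) : Prop :=
  ∀ ε : ℝ, 0 < ε →
    (∑' n : ℕ, ENNReal.ofReal ((n + 1 : ℝ) ^ (r - 1)) * ⨆ k : ℕ,
      M.P k {ω | ε < |M.Z (k + (n + 1)) k ω / (n + 1) - I|}) < ⊤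

/-- The class `H(β,k*,m*)` : local probability of a false alarm in windows of
length `m*` starting at `1 ≤ k ≤ k* - m*` is at most `β`. -/
def Hclass (β : ℝ) (kstar mstar : ℕ) : Set (Ω → ℕ∞) :=
  {τ | M.IsDetection τ ∧ ∀ k : ℕ, 1 ≤ k → k + mstar ≤ kstar →
    M.Pinf {ω | (k : ℕ∞) ≤ τ ω ∧ τ ω < ((k + mstar : ℕ) : ℕ∞)} ≤ ENNReal.ofReal β}

/-- The class `H*(β,k*,m*)` : local conditional probability of a false alarm
`P_∞(τ < k+m* | τ > k)` is at most `β` for `1 ≤ k ≤ k* - m*`. -/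
def HclassStar (β : ℝ) (kstar mstar : ℕ) : Set (Ω → ℕ∞) :=
  {τ | M.IsDetection τ ∧ ∀ k : ℕ, 1 ≤ k → k + mstar ≤ kstar →
    M.Pinf {ω | (k : ℕ∞) < τ ω ∧ τ ω < ((k + mstar : ℕ) : ℕ∞)}
        / M.Pinf {ω | (k : ℕ∞) < τ ω} ≤ ENNReal.ofReal β}

end ChangePointModel

/-- `ϱ_{1,β} = 1/(1+|log β|)`. -/
def rho1 (β : ℝ) : ℝ := 1 / (1 + |Real.log β|)

/-- `ϱ_{2,β} = ϱ_{1,β}/(1+|log|log β||)`. -/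
def rho2 (β : ℝ) : ℝ := rho1 β / (1 + |Real.log (|Real.log β|)|)

/-- `α₁(β,m*) = β + (1-ϱ_{1,β})^{m*+1}`. -/
def alpha1 (β : ℝ) (m : ℕ) : ℝ := β + (1 - rho1 β) ^ (m + 1)

/-- `α₂(β,k*) = β (1-ϱ_{2,β})^{k*}`. -/
def alpha2 (β : ℝ) (k : ℕ) : ℝ := β * (1 - rho2 β) ^ k

/-- `α₃(β,k*) = β (1-ϱ_{2,β})^{k*} / (1+β)`. -/
def alpha3 (β : ℝ) (k : ℕ) : ℝ := β * (1 - rho2 β) ^ k / (1 + β)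

namespace ChangePointModel

variable {Ω : Type} [m0 : MeasurableSpace Ω] (M : ChangePointModel Ω)

/-- The three asymptotic relations of Proposition A.1 for the SR procedure `T(h)` as
`h → ∞`: upper bounds for the pointwise moment risks and conditional moment risks of order
`r`, and the exact first-order asymptotics of the supremum of the moment risks. -/
def ThreeRelations (r I : ℝ) : Prop :=
  (∀ ν : ℕ,
    Filter.limsup (fun h : ℝ =>
      M.riskPow r ν (M.SR h) / ENNReal.ofReal (Real.log h ^ r)) atTop
      ≤ ENNReal.ofReal (1 / I ^ r)) ∧
  (∀ ν : ℕ,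
    Filter.limsup (fun h : ℝ =>
      M.criskPow r ν (M.SR h) / ENNReal.ofReal (Real.log h ^ r)) atTop
      ≤ ENNReal.ofReal (1 / I ^ r)) ∧
  Tendsto (fun h : ℝ =>
      (⨆ ν : ℕ, M.riskPow r ν (M.SR h)) / ENNReal.ofReal (Real.log h ^ r)) atTop
    (𝓝 (ENNReal.ofReal (1 / I ^ r)))

/-- The condition `lim_{M→∞} P_0(max_{1≤n≤M} Z_n^0 ≥ I(1+ε)M) = 0` for all `ε > 0`. -/
def PmaxCond (I : ℝ) : Prop :=
  ∀ ε : ℝ, 0 < ε →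
    Tendsto (fun N : ℕ =>
        M.P 0 {ω | ∃ n : ℕ, 1 ≤ n ∧ n ≤ N ∧ I * (1 + ε) * N ≤ M.Z n 0 ω})
      atTop (𝓝 0)

/-- The one-sided (left-tail) uniform `r`-complete convergence condition. -/
def LeftTailCond (r I : ℝ) : Prop :=
  ∀ ε : ℝ, 0 < ε →
    (∑' n : ℕ, ENNReal.ofReal ((n + 1 : ℝ) ^ (r - 1)) * ⨆ ν : ℕ,
      M.P ν {ω | M.Z (ν + (n + 1)) ν ω / (n + 1) < I - ε}) < ⊤

end ChangePointModel

lemma add_one_rpow_le {r x : ℝ} (hr : 0 ≤ r) (hx : 1 ≤ x) :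
    (x + 1) ^ r ≤ x ^ r + r * 2 ^ r * x ^ (r - 1) := by
  have hx0 : 0 < x := by linarith
  obtain ⟨c, ⟨hxc, hcx⟩, hslope⟩ := exists_hasDerivAt_eq_slope (fun t => t ^ r)
    (fun t => r * t ^ (r - 1)) (lt_add_one x)
    (continuousOn_id.rpow_const fun t ht => Or.inl (hx0.trans_le ht.1).ne')
    fun t ht => Real.hasDerivAt_rpow_const (Or.inl (hx0.trans ht.1).ne')
  have hc : c ^ (r - 1) ≤ 2 ^ r * x ^ (r - 1) := by
    have hc0 : 0 < c := hx0.trans hxc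
    calc c ^ (r - 1) = c ^ r / c := Real.rpow_sub_one hc0.ne' r
      _ ≤ (2 * x) ^ r / x := by gcongr; linarith
      _ = 2 ^ r * x ^ (r - 1) := by
        rw [Real.mul_rpow zero_le_two hx0.le, Real.rpow_sub_one hx0.ne', mul_div_assoc]
  simp only [add_sub_cancel_left, div_one] at hslope
  linarith [mul_le_mul_of_nonneg_left hc hr]

lemma add_natCast_rpow_le_add_sum {r x : ℝ} (hr : 0 ≤ r) (hx : 1 ≤ x) (k : ℕ) :
    (x + k) ^ r ≤ x ^ r + r * 2 ^ r * ∑ i ∈ Finset.range k, (x + i) ^ (r - 1) := by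
  induction k with
  | zero => simp
  | succ k ih =>
    have hstep := add_one_rpow_le hr (hx.trans (le_add_of_nonneg_right k.cast_nonneg))
    rw [Finset.sum_range_succ, mul_add, Nat.cast_succ, ← add_assoc x]
    linarith

lemma natCast_rpow_eq_ofReal {r : ℝ} (hr : 0 ≤ r) (n : ℕ) :
    (n : ℝ≥0∞) ^ r = ENNReal.ofReal ((n : ℝ) ^ r) := by
  rw [← ENNReal.ofReal_rpow_of_nonneg n.cast_nonneg hr, ENNReal.ofReal_natCast]

lemma enat_rpow_le_of_forall_natCast {r : ℝ} {x : ℕ∞} {b : ℝ≥0∞}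
    (hb : ∀ n : ℕ, (n : ℕ∞) ≤ x → (n : ℝ≥0∞) ^ r ≤ b) : (x : ℝ≥0∞) ^ r ≤ b := by
  induction x using ENat.recTopCoe with
  | coe n => exact hb n le_rfl
  | top =>
    have hlim : Tendsto (fun n : ℕ => (n : ℝ≥0∞) ^ r) atTop (𝓝 (∞ ^ r)) :=
      (ENNReal.continuous_rpow_const.tendsto ∞).comp ENNReal.tendsto_nat_nhds_top
    exact le_of_tendsto' hlim fun n => hb n le_top

lemma enat_rpow_le_add_tsum {r : ℝ} (hr : 0 ≤ r) (x : ℕ∞) (N : ℕ) :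
    (x : ℝ≥0∞) ^ r ≤ ((N + 1 : ℕ) : ℝ≥0∞) ^ r + ENNReal.ofReal (r * 2 ^ r) *
      ∑' n : ℕ, ENNReal.ofReal (((N + n : ℕ) + 1 : ℝ) ^ (r - 1)) *
        (Ioi ((N + n + 1 : ℕ) : ℕ∞)).indicator 1 x := by
  set f : ℕ → ℝ≥0∞ := fun n => ENNReal.ofReal (((N + n : ℕ) + 1 : ℝ) ^ (r - 1)) *
    (Ioi ((N + n + 1 : ℕ) : ℕ∞)).indicator 1 x with hf
  refine enat_rpow_le_of_forall_natCast fun m hm => ?_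
  rcases le_total m (N + 1) with hmN | hNm
  · exact le_add_right (ENNReal.rpow_le_rpow (by exact_mod_cast hmN) hr)
  obtain ⟨k, rfl⟩ := Nat.exists_eq_add_of_le hNm
  have hfn : ∀ n ∈ Finset.range k, f n = ENNReal.ofReal ((((N + 1 : ℕ) : ℝ) + n) ^ (r - 1)) := by
    intro n hn
    have hlt : ((N + n + 1 : ℕ) : ℕ∞) < x :=
      lt_of_lt_of_le (by have := Finset.mem_range.1 hn; exact_mod_cast (by omega)) hm
    simp only [hf, indicator_of_mem (mem_Ioi.2 hlt), Pi.one_apply, mul_one]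
    push_cast
    ring_nf
  calc ((N + 1 + k : ℕ) : ℝ≥0∞) ^ r
      = ENNReal.ofReal ((((N + 1 : ℕ) : ℝ) + k) ^ r) := by
        rw [natCast_rpow_eq_ofReal hr, Nat.cast_add (N + 1) k]
    _ ≤ ENNReal.ofReal (((N + 1 : ℕ) : ℝ) ^ r + r * 2 ^ r *
          ∑ i ∈ Finset.range k, (((N + 1 : ℕ) : ℝ) + i) ^ (r - 1)) :=
        ENNReal.ofReal_le_ofReal (add_natCast_rpow_le_add_sum hr (by simp) k)
    _ = ((N + 1 : ℕ) : ℝ≥0∞) ^ r + ENNReal.ofReal (r * 2 ^ r) * ∑ n ∈ Finset.range k, f n := by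
        rw [ENNReal.ofReal_add (by positivity) (by positivity),
          ENNReal.ofReal_mul (by positivity), ENNReal.ofReal_sum_of_nonneg fun _ _ => by positivity,
          natCast_rpow_eq_ofReal hr, Finset.sum_congr rfl hfn]
    _ ≤ _ := by gcongr; exact ENNReal.sum_le_tsum _

section Measure

variable {α : Type*} {mα : MeasurableSpace α}

lemma measurable_enat_of_measurableSet_le {f : α → ℕ∞}
    (hf : ∀ n : ℕ, MeasurableSet {a | f a ≤ n}) : Measurable f := by
  refine ENat.measurable_iff.2 fun n => ?_
  have hsdiff : f ⁻¹' {(n : ℕ∞)} = {a | f a ≤ n} \ ⋃ m < n, {a | f a ≤ m} := by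
    ext a
    simp only [mem_preimage, mem_singleton_iff, Set.mem_sdiff, mem_ofPred_eq, mem_iUnion,
      exists_prop, not_exists, not_and, not_le]
    refine ⟨fun h => ⟨h.le, fun m hm => h ▸ by exact_mod_cast hm⟩, fun ⟨hle, hlt⟩ => ?_⟩
    obtain ⟨k, hk⟩ := ENat.ne_top_iff_exists.1 (ne_top_of_le_ne_top (ENat.natCast_ne_top n) hle)
    refine hle.antisymm (not_lt.1 fun hkn => ?_)
    rw [← hk] at hkn hlt
    exact (hlt k (by exact_mod_cast hkn)).false
  rw [hsdiff]
  exact (hf n).diff (.biUnion (to_countable _) fun m _ => hf m)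

lemma lintegral_enat_rpow_le_add_tsum (μ : Measure α) {X : α → ℕ∞} (hX : Measurable X) {r : ℝ}
    (hr : 0 ≤ r) (N : ℕ) :
    ∫⁻ a, (X a : ℝ≥0∞) ^ r ∂μ ≤ ((N + 1 : ℕ) : ℝ≥0∞) ^ r * μ univ + ENNReal.ofReal (r * 2 ^ r) *
      ∑' n : ℕ, ENNReal.ofReal (((N + n : ℕ) + 1 : ℝ) ^ (r - 1)) *
        μ {a | ((N + n + 1 : ℕ) : ℕ∞) < X a} := by
  have hind : ∀ n : ℕ, Measurable
      fun a => (Ioi ((N + n + 1 : ℕ) : ℕ∞)).indicator (1 : ℕ∞ → ℝ≥0∞) (X a) :=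
    fun n => (Measurable.of_discrete (f := indicator _ _)).comp hX
  have hlint : ∀ n : ℕ, ∫⁻ a, (Ioi ((N + n + 1 : ℕ) : ℕ∞)).indicator 1 (X a) ∂μ
      = μ {a | ((N + n + 1 : ℕ) : ℕ∞) < X a} :=
    fun n => lintegral_indicator_one (s := X ⁻¹' Ioi ((N + n + 1 : ℕ) : ℕ∞))
      (hX MeasurableSet.of_discrete)
  refine (lintegral_mono fun a => enat_rpow_le_add_tsum hr (X a) N).trans_eq ?_
  rw [lintegral_add_left measurable_const, lintegral_const,
    lintegral_const_mul _ (Measurable.tsum fun n => (hind n).const_mul _),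
    lintegral_tsum fun n => ((hind n).const_mul _).aemeasurable]
  simp only [lintegral_const_mul _ (hind _), hlint]

lemma natCast_rpow_mul_measure_lt_le_lintegral (μ : Measure α) {X : α → ℕ∞} (hX : Measurable X)
    {r : ℝ} (hr : 0 ≤ r) (m : ℕ) :
    (m : ℝ≥0∞) ^ r * μ {a | (m : ℕ∞) < X a} ≤ ∫⁻ a, (X a : ℝ≥0∞) ^ r ∂μ := by
  refine le_trans ?_ (mul_meas_ge_le_lintegral (by fun_prop) ((m : ℝ≥0∞) ^ r))
  gcongr with a
  intro hlt
  exact ENNReal.rpow_le_rpow (ENat.toENNReal_le.2 hlt.le) hr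

lemma lintegral_exp_llr_le {μ ν : Measure α} [SigmaFinite μ] [SigmaFinite ν] (hνμ : ν ≪ μ) :
    ∫⁻ a, ENNReal.ofReal (Real.exp (llr μ ν a)) ∂ν ≤ μ univ := by
  refine (lintegral_congr_ae ?_).trans_le (Measure.lintegral_rnDeriv_le (ν := ν))
  filter_upwards [exp_llr_of_ac' μ ν hνμ, Measure.rnDeriv_lt_top μ ν] with a hexp hfin
  rw [hexp, ENNReal.ofReal_toReal hfin.ne]

lemma ae_rnDeriv_le_exp_of_llr_le (μ ν : Measure α) [SigmaFinite μ] (C : ℝ) :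
    ∀ᵐ a ∂ν, llr μ ν a ≤ C → μ.rnDeriv ν a ≤ ENNReal.ofReal (Real.exp C) := by
  filter_upwards [Measure.rnDeriv_lt_top μ ν] with a hfin hC
  rw [← ENNReal.ofReal_toReal hfin.ne]
  exact ENNReal.ofReal_le_ofReal ((Real.le_exp_log _).trans (Real.exp_le_exp.2 hC))

lemma measure_le_measure_le_llr_add {μ ν : Measure α} [SigmaFinite μ] [SigmaFinite ν]
    (hμν : μ ≪ ν) (C : ℝ) (s : Set α) :
    μ s ≤ μ {a | C ≤ llr μ ν a} + ENNReal.ofReal (Real.exp C) * ν s := by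
  set t := {a | C ≤ llr μ ν a}
  have hdiff : μ (s \ t) ≤ ENNReal.ofReal (Real.exp C) * ν s := by
    calc μ (s \ t) = ∫⁻ a in s \ t, μ.rnDeriv ν a ∂ν :=
          (Measure.setLIntegral_rnDeriv hμν _).symm
      _ ≤ ∫⁻ _ in s \ t, ENNReal.ofReal (Real.exp C) ∂ν := by
          refine setLIntegral_mono_ae measurable_const.aemeasurable ?_
          filter_upwards [ae_rnDeriv_le_exp_of_llr_le μ ν C] with a hle ha
          exact hle (not_le.1 ha.2).le
      _ = ENNReal.ofReal (Real.exp C) * ν (s \ t) := setLIntegral_const _ _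
      _ ≤ ENNReal.ofReal (Real.exp C) * ν s := by gcongr; exact sdiff_subset
  calc μ s ≤ μ (s ∩ t) + μ (s \ t) := measure_le_inter_add_sdiff μ s t
    _ ≤ μ t + ENNReal.ofReal (Real.exp C) * ν s := by gcongr; exact inter_subset_right

lemma tendsto_measure_compl_one {ι : Type*} {l : Filter ι} {μ : Measure α}
    [IsProbabilityMeasure μ] {s : ι → Set α} (hs : ∀ i, MeasurableSet (s i))
    (hlim : Tendsto (fun i => μ (s i)) l (𝓝 0)) : Tendsto (fun i => μ (s i)ᶜ) l (𝓝 1) := by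
  simpa only [prob_compl_eq_one_sub (hs _), tsub_zero] using
    ENNReal.Tendsto.sub tendsto_const_nhds hlim (Or.inl one_ne_top)

end Measure

section Asymptotics

lemma tendsto_natCast_rpow_div_ofReal_rpow {ι : Type*} {l : Filter ι} {u : ι → ℕ} {v : ι → ℝ}
    {b r : ℝ} (hr : 0 ≤ r) (hv : ∀ᶠ i in l, 0 < v i)
    (huv : Tendsto (fun i => u i / v i) l (𝓝 b)) :
    Tendsto (fun i => (u i : ℝ≥0∞) ^ r / ENNReal.ofReal (v i ^ r)) l
      (𝓝 (ENNReal.ofReal (b ^ r))) := by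
  refine (ENNReal.tendsto_ofReal (huv.rpow_const (Or.inr hr))).congr' ?_
  filter_upwards [hv] with i hi
  rw [natCast_rpow_eq_ofReal hr, ← ENNReal.ofReal_div_of_pos (by positivity),
    Real.div_rpow (Nat.cast_nonneg _) hi.le]

lemma continuousAt_ofReal_inv_rpow {I : ℝ} (r : ℝ) (hI : 0 < I) :
    ContinuousAt (fun a : ℝ => ENNReal.ofReal (a⁻¹ ^ r)) I :=
  ENNReal.continuous_ofReal.continuousAt.comp
    ((continuousAt_inv₀ hI.ne').rpow_const (Or.inl (inv_pos.2 hI).ne'))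

lemma tendsto_floor_mul_log_div_log {b : ℝ} (hb : 0 ≤ b) :
    Tendsto (fun h : ℝ => (⌊b * Real.log h⌋₊ : ℝ) / Real.log h) atTop (𝓝 b) :=
  (tendsto_nat_floor_mul_div_atTop hb).comp Real.tendsto_log_atTop

lemma tendsto_floor_mul_log_atTop {b : ℝ} (hb : 0 < b) :
    Tendsto (fun h : ℝ => ⌊b * Real.log h⌋₊) atTop atTop :=
  tendsto_nat_floor_atTop.comp (Real.tendsto_log_atTop.const_mul_atTop hb)

lemma eventually_log_pos : ∀ᶠ h : ℝ in atTop, 0 < Real.log h :=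
  Real.tendsto_log_atTop.eventually_gt_atTop 0

lemma tendsto_const_div_ofReal_log_rpow {r : ℝ} (hr : 0 < r) {K : ℝ≥0∞} (hK : K ≠ ∞) :
    Tendsto (fun h : ℝ => K / ENNReal.ofReal (Real.log h ^ r)) atTop (𝓝 0) := by
  have hden : Tendsto (fun h : ℝ => ENNReal.ofReal (Real.log h ^ r)) atTop (𝓝 ∞) :=
    ENNReal.tendsto_ofReal_atTop.comp ((tendsto_rpow_atTop hr).comp Real.tendsto_log_atTop)
  simpa only [ENNReal.div_top] using ENNReal.Tendsto.const_div hden (Or.inr hK)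

lemma tendsto_floor_add_one_rpow_add_div {b r : ℝ} (hb : 0 ≤ b) (hr : 0 < r) {K : ℝ≥0∞}
    (hK : K ≠ ∞) :
    Tendsto (fun h : ℝ => (((⌊b * Real.log h⌋₊ + 1 : ℕ) : ℝ≥0∞) ^ r + K)
      / ENNReal.ofReal (Real.log h ^ r)) atTop (𝓝 (ENNReal.ofReal (b ^ r))) := by
  have hratio : Tendsto (fun h : ℝ => ((⌊b * Real.log h⌋₊ + 1 : ℕ) : ℝ) / Real.log h) atTop
      (𝓝 b) := by
    simpa only [Nat.cast_add_one, add_div, one_div, add_zero, Function.comp_apply] using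
      (tendsto_floor_mul_log_div_log hb).add (tendsto_inv_atTop_zero.comp Real.tendsto_log_atTop)
  simpa only [ENNReal.add_div, add_zero] using
    (tendsto_natCast_rpow_div_ofReal_rpow hr.le eventually_log_pos hratio).add
      (tendsto_const_div_ofReal_log_rpow hr hK)

lemma exp_mul_floor_mul_sq_div_le {a c h : ℝ} (ha : 0 < a) (hc : 0 ≤ c) (hh : 1 ≤ h) :
    Real.exp (c * ⌊a⁻¹ * Real.log h⌋₊) * ((⌊a⁻¹ * Real.log h⌋₊ : ℝ) ^ 2 / h) ≤
      a⁻¹ ^ 2 * (Real.log h ^ (2 : ℝ) * Real.exp (-(1 - c * a⁻¹) * Real.log h)) := by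
  have hlog : 0 ≤ Real.log h := Real.log_nonneg hh
  have hfloor : (⌊a⁻¹ * Real.log h⌋₊ : ℝ) ≤ a⁻¹ * Real.log h := Nat.floor_le (by positivity)
  calc Real.exp (c * ⌊a⁻¹ * Real.log h⌋₊) * ((⌊a⁻¹ * Real.log h⌋₊ : ℝ) ^ 2 / h)
      ≤ Real.exp (c * (a⁻¹ * Real.log h)) * ((a⁻¹ * Real.log h) ^ 2 / h) := by gcongr
    _ = a⁻¹ ^ 2 * (Real.log h ^ (2 : ℝ) * (Real.exp (c * (a⁻¹ * Real.log h)) / h)) := by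
        rw [Real.rpow_two]; ring
    _ = _ := by
        nth_rewrite 3 [← Real.exp_log (zero_lt_one.trans_le hh)]
        rw [← Real.exp_sub]
        ring_nf

lemma tendsto_ofReal_exp_mul_floor_mul_sq_div {a c : ℝ} (hc : 0 ≤ c) (hca : c < a) :
    Tendsto (fun h : ℝ => ENNReal.ofReal (Real.exp (c * ⌊a⁻¹ * Real.log h⌋₊)) *
      ENNReal.ofReal ((⌊a⁻¹ * Real.log h⌋₊ : ℝ) ^ 2 / h)) atTop (𝓝 0) := by
  have ha : 0 < a := hc.trans_lt hca
  have hrate : 0 < 1 - c * a⁻¹ := by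
    rw [sub_pos, ← div_eq_mul_inv]
    exact (div_lt_one ha).2 hca
  have hbound : Tendsto (fun h : ℝ => ENNReal.ofReal (a⁻¹ ^ 2 *
      (Real.log h ^ (2 : ℝ) * Real.exp (-(1 - c * a⁻¹) * Real.log h)))) atTop (𝓝 0) := by
    simpa only [mul_zero, ENNReal.ofReal_zero, Function.comp_def] using ENNReal.tendsto_ofReal
      (((tendsto_rpow_mul_exp_neg_mul_atTop_nhds_zero 2 _ hrate).comp
        Real.tendsto_log_atTop).const_mul (a⁻¹ ^ 2))
  refine tendsto_of_tendsto_of_tendsto_of_le_of_le' tendsto_const_nhds hbound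
    (Eventually.of_forall fun _ => zero_le) ?_
  filter_upwards [eventually_ge_atTop 1] with h hh
  rw [← ENNReal.ofReal_mul (Real.exp_pos _).le]
  exact ENNReal.ofReal_le_ofReal (exp_mul_floor_mul_sq_div_le ha hc hh)

end Asymptotics

namespace ChangePointModel

variable {Ω : Type} [m0 : MeasurableSpace Ω] (M : ChangePointModel Ω)

instance instIsProbabilityMeasureP (k : ℕ) : IsProbabilityMeasure (M.P k) := M.P_prob k

instance instIsProbabilityMeasurePinf : IsProbabilityMeasure M.Pinf := M.Pinf_prob

section LikelihoodRatio

lemma measurable_F_Z (n k : ℕ) : Measurable[M.F n] (M.Z n k) :=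
  measurable_llr _ _

lemma measurable_Z (n k : ℕ) : Measurable (M.Z n k) :=
  (M.measurable_F_Z n k).mono (M.F_le n) le_rfl

lemma lintegral_exp_Z_le {n k : ℕ} (hk : k < n) :
    ∫⁻ ω, ENNReal.ofReal (Real.exp (M.Z n k ω)) ∂M.Pinf ≤ 1 := by
  have hmeas : Measurable[M.F n] fun ω => ENNReal.ofReal (Real.exp (M.Z n k ω)) :=
    (Real.measurable_exp.comp (M.measurable_F_Z n k)).ennreal_ofReal
  rw [← lintegral_trim (M.F_le n) hmeas]
  exact (lintegral_exp_llr_le (M.ac₂ k n hk)).trans_eq (by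
    rw [trim_measurableSet_eq _ .univ, measure_univ])

lemma P_le_P_le_Z_add {n k : ℕ} (hk : k < n) (C : ℝ) {s : Set Ω} (hs : MeasurableSet[M.F n] s) :
    M.P k s ≤ M.P k {ω | C ≤ M.Z n k ω} + ENNReal.ofReal (Real.exp C) * M.Pinf s := by
  have hC : MeasurableSet[M.F n] {ω | C ≤ M.Z n k ω} := M.measurable_F_Z n k measurableSet_Ici
  rw [← trim_measurableSet_eq (M.F_le n) hs, ← trim_measurableSet_eq (M.F_le n) hs,
    ← trim_measurableSet_eq (M.F_le n) hC]
  exact measure_le_measure_le_llr_add (M.ac₁ k n hk) C s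

end LikelihoodRatio

section ShiryaevRoberts

lemma measurable_F_SRstat (n : ℕ) : Measurable[M.F n] (M.SRstat n) := by
  unfold SRstat
  exact @Finset.measurable_fun_sum _ _ _ _ _ _ (M.F n) _ _ fun k _ =>
    Real.measurable_exp.comp (M.measurable_F_Z n k)

lemma lintegral_SRstat_le (n : ℕ) : ∫⁻ ω, ENNReal.ofReal (M.SRstat n ω) ∂M.Pinf ≤ n := by
  calc ∫⁻ ω, ENNReal.ofReal (M.SRstat n ω) ∂M.Pinf
      = ∑ k ∈ Finset.range n, ∫⁻ ω, ENNReal.ofReal (Real.exp (M.Z n k ω)) ∂M.Pinf := by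
        simp only [SRstat, ENNReal.ofReal_sum_of_nonneg fun _ _ => (Real.exp_pos _).le]
        exact lintegral_finsetSum _ fun k _ =>
          (Real.measurable_exp.comp (M.measurable_Z n k)).ennreal_ofReal
    _ ≤ ∑ k ∈ Finset.range n, 1 :=
        Finset.sum_le_sum fun k hk => M.lintegral_exp_Z_le (Finset.mem_range.1 hk)
    _ = n := by simp

lemma Pinf_le_SRstat_le {h : ℝ} (hh : 0 < h) (n : ℕ) :
    M.Pinf {ω | h ≤ M.SRstat n ω} ≤ ENNReal.ofReal (n / h) := by
  have hmeas : Measurable fun ω => ENNReal.ofReal (M.SRstat n ω) :=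
    ((M.measurable_F_SRstat n).mono (M.F_le n) le_rfl).ennreal_ofReal
  calc M.Pinf {ω | h ≤ M.SRstat n ω}
      ≤ M.Pinf {ω | ENNReal.ofReal h ≤ ENNReal.ofReal (M.SRstat n ω)} :=
        measure_mono fun ω hω => ENNReal.ofReal_le_ofReal hω
    _ ≤ (∫⁻ ω, ENNReal.ofReal (M.SRstat n ω) ∂M.Pinf) / ENNReal.ofReal h :=
        meas_ge_le_lintegral_div hmeas.aemeasurable (ENNReal.ofReal_pos.2 hh).ne' ofReal_ne_top
    _ ≤ n / ENNReal.ofReal h := ENNReal.div_le_div_right (M.lintegral_SRstat_le n) _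
    _ = ENNReal.ofReal (n / h) := by
        rw [ENNReal.ofReal_div_of_pos hh, ENNReal.ofReal_natCast]

lemma exp_Z_le_SRstat {n k : ℕ} (hk : k < n) (ω : Ω) : Real.exp (M.Z n k ω) ≤ M.SRstat n ω :=
  Finset.single_le_sum (f := fun k => Real.exp (M.Z n k ω)) (fun _ _ => (Real.exp_pos _).le)
    (Finset.mem_range.2 hk)

lemma SR_le_iff (h : ℝ) (ω : Ω) (m : ℕ) :
    M.SR h ω ≤ m ↔ ∃ n ∈ Finset.Icc 1 m, h ≤ M.SRstat n ω := by
  rw [← ENat.lt_add_one_iff (ENat.natCast_ne_top m), SR, sInf_lt_iff]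
  constructor
  · rintro ⟨_, ⟨n, rfl, hn, hstat⟩, hnm⟩
    have hnm : n < m + 1 := by exact_mod_cast hnm
    exact ⟨n, Finset.mem_Icc.2 ⟨hn, Nat.lt_succ_iff.1 hnm⟩, hstat⟩
  · rintro ⟨n, hn, hstat⟩
    obtain ⟨hn, hnm⟩ := Finset.mem_Icc.1 hn
    exact ⟨n, ⟨n, rfl, hn, hstat⟩, by exact_mod_cast Nat.lt_succ_of_le hnm⟩

lemma setOf_SR_le (h : ℝ) (m : ℕ) :
    {ω | M.SR h ω ≤ m} = ⋃ n ∈ Finset.Icc 1 m, {ω | h ≤ M.SRstat n ω} := by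
  ext ω
  simp only [mem_ofPred_eq, SR_le_iff, mem_iUnion, exists_prop]

lemma measurableSet_F_SR_le (h : ℝ) (m : ℕ) : MeasurableSet[M.F m] {ω | M.SR h ω ≤ m} := by
  rw [setOf_SR_le]
  exact @Finset.measurableSet_biUnion _ _ (M.F m) _ _ fun n hn =>
    M.F_mono (Finset.mem_Icc.1 hn).2 _ (M.measurable_F_SRstat n measurableSet_Ici)

lemma measurableSet_SR_le (h : ℝ) (m : ℕ) : MeasurableSet {ω | M.SR h ω ≤ m} :=
  M.F_le m _ (M.measurableSet_F_SR_le h m)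

lemma measurable_SR (h : ℝ) : Measurable (M.SR h) :=
  measurable_enat_of_measurableSet_le (M.measurableSet_SR_le h)

/-- The union bound loses a factor `m` against the bound `m / h` from the submartingale maximal
inequality; this is immaterial on the scale `m ~ log h`. -/
lemma Pinf_SR_le {h : ℝ} (hh : 0 < h) (m : ℕ) :
    M.Pinf {ω | M.SR h ω ≤ m} ≤ ENNReal.ofReal ((m : ℝ) ^ 2 / h) := by
  rw [setOf_SR_le]
  calc M.Pinf (⋃ n ∈ Finset.Icc 1 m, {ω | h ≤ M.SRstat n ω})
      ≤ ∑ n ∈ Finset.Icc 1 m, M.Pinf {ω | h ≤ M.SRstat n ω} := measure_biUnion_finset_le _ _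
    _ ≤ ∑ _n ∈ Finset.Icc 1 m, ENNReal.ofReal (m / h) := by
        refine Finset.sum_le_sum fun n hn => (M.Pinf_le_SRstat_le hh n).trans ?_
        have hnm : (n : ℝ) ≤ m := by exact_mod_cast (Finset.mem_Icc.1 hn).2
        gcongr
    _ = ENNReal.ofReal ((m : ℝ) ^ 2 / h) := by
        rw [Finset.sum_const, Nat.card_Icc, Nat.add_sub_cancel, ← ENNReal.ofReal_nsmul,
          nsmul_eq_mul, ← mul_div_assoc, sq]

lemma Z_lt_log_of_lt_SR {h : ℝ} (hh : 0 < h) {n k : ℕ} (hk : k < n) {ω : Ω}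
    (hn : (n : ℕ∞) < M.SR h ω) : M.Z n k ω < Real.log h := by
  have hstat : M.SRstat n ω < h := by
    contrapose! hn
    exact (M.SR_le_iff h ω n).2 ⟨n, Finset.mem_Icc.2 ⟨by omega, le_rfl⟩, hn⟩
  exact (Real.lt_log_iff_exp_lt hh).2 ((M.exp_Z_le_SRstat hk ω).trans_lt hstat)

lemma tendsto_P_lt_SR (ν : ℕ) :
    Tendsto (fun h : ℝ => M.P ν {ω | (ν : ℕ∞) < M.SR h ω}) atTop (𝓝 1) := by
  have hPinf : ∀ h, M.P ν {ω | M.SR h ω ≤ ν} = M.Pinf {ω | M.SR h ω ≤ ν} := fun h => by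
    rw [← trim_measurableSet_eq (M.F_le ν) (M.measurableSet_F_SR_le h ν), M.agree ν ν le_rfl,
      trim_measurableSet_eq (M.F_le ν) (M.measurableSet_F_SR_le h ν)]
  have hbound : Tendsto (fun h : ℝ => ENNReal.ofReal ((ν : ℝ) ^ 2 / h)) atTop (𝓝 0) := by
    simpa only [ENNReal.ofReal_zero, id_eq] using
      ENNReal.tendsto_ofReal (tendsto_const_nhds.div_atTop tendsto_id)
  have hfalse : Tendsto (fun h : ℝ => M.P ν {ω | M.SR h ω ≤ ν}) atTop (𝓝 0) := by
    refine tendsto_of_tendsto_of_tendsto_of_le_of_le' tendsto_const_nhds hbound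
      (Eventually.of_forall fun _ => zero_le) ?_
    filter_upwards [eventually_gt_atTop 0] with h hh
    exact (hPinf h).trans_le (M.Pinf_SR_le hh ν)
  simpa only [compl_ofPred, not_le] using
    tendsto_measure_compl_one (fun h => M.measurableSet_SR_le h ν) hfalse

end ShiryaevRoberts

section UpperBound

/-- The series of the left-tail condition, with `a` in place of `I - ε`. -/
def leftTailSum (r a : ℝ) : ℝ≥0∞ :=
  ∑' n : ℕ, ENNReal.ofReal ((n + 1 : ℝ) ^ (r - 1)) * ⨆ ν : ℕ,
    M.P ν {ω | M.Z (ν + (n + 1)) ν ω / (n + 1) < a}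

lemma LeftTailCond.leftTailSum_ne_top {M : ChangePointModel Ω} {r I a : ℝ}
    (hL : M.LeftTailCond r I) (ha : a < I) : M.leftTailSum r a ≠ ∞ := by
  have hfin := hL (I - a) (sub_pos.2 ha)
  rw [_root_.sub_sub_cancel] at hfin
  exact hfin.ne

lemma Z_div_lt_of_lt_SR_sub {a h : ℝ} (hh : 0 < h) {ν n : ℕ} (hn : Real.log h ≤ a * (n + 1))
    {ω : Ω} (hω : ((n + 1 : ℕ) : ℕ∞) < M.SR h ω - ν) :
    M.Z (ν + (n + 1)) ν ω / (n + 1) < a := by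
  have hlt : ((ν + (n + 1) : ℕ) : ℕ∞) < M.SR h ω := by
    rw [Nat.cast_add]
    exact lt_tsub_iff_left.1 hω
  rw [div_lt_iff₀ (by positivity)]
  exact (M.Z_lt_log_of_lt_SR hh (by omega) hlt).trans_le hn

lemma riskPow_SR_le {r a h : ℝ} (hr : 0 ≤ r) (ha : 0 < a) (hh : 0 < h) (ν : ℕ) :
    M.riskPow r ν (M.SR h) ≤ ((⌊a⁻¹ * Real.log h⌋₊ + 1 : ℕ) : ℝ≥0∞) ^ r +
      ENNReal.ofReal (r * 2 ^ r) * M.leftTailSum r a := by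
  set N := ⌊a⁻¹ * Real.log h⌋₊ with hN
  have hlog : ∀ n : ℕ, Real.log h ≤ a * ((N + n : ℕ) + 1) := by
    intro n
    rw [← inv_mul_le_iff₀ ha]
    refine (Nat.lt_floor_add_one _).le.trans ?_
    rw [← hN]
    gcongr
    exact Nat.le_add_right N n
  have hmoment := lintegral_enat_rpow_le_add_tsum (M.P ν) (X := fun ω => M.SR h ω - ν)
    (Measurable.of_discrete.comp (M.measurable_SR h) (g := fun x : ℕ∞ => x - ν)) hr N
  rw [measure_univ, mul_one] at hmoment
  refine hmoment.trans ?_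
  gcongr
  refine (ENNReal.tsum_le_tsum fun n => ?_).trans
    (ENNReal.tsum_comp_le_tsum_of_injective (add_right_injective N) _)
  gcongr
  exact (measure_mono fun ω hω => M.Z_div_lt_of_lt_SR_sub hh (hlog n) hω).trans
    (le_iSup (fun ν => M.P ν {ω | M.Z (ν + (N + n + 1)) ν ω / ((N + n : ℕ) + 1) < a}) ν)

lemma limsup_iSup_riskPow_SR_le_of_leftTailSum {r a : ℝ} (hr : 0 < r) (ha : 0 < a)
    (hfin : M.leftTailSum r a ≠ ∞) :
    limsup (fun h : ℝ => (⨆ ν : ℕ, M.riskPow r ν (M.SR h)) / ENNReal.ofReal (Real.log h ^ r))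
      atTop ≤ ENNReal.ofReal (a⁻¹ ^ r) := by
  rw [← (tendsto_floor_add_one_rpow_add_div (inv_nonneg.2 ha.le) hr
    (ENNReal.mul_ne_top (ENNReal.ofReal_ne_top (r := r * 2 ^ r)) hfin)).limsup_eq]
  refine limsup_le_limsup ?_
  filter_upwards [eventually_gt_atTop 0] with h hh
  exact ENNReal.div_le_div_right (iSup_le fun ν => M.riskPow_SR_le hr.le ha hh ν) _

lemma limsup_iSup_riskPow_SR_le {r I : ℝ} (hI : 0 < I) (hr : 0 < r) (hL : M.LeftTailCond r I) :
    limsup (fun h : ℝ => (⨆ ν : ℕ, M.riskPow r ν (M.SR h)) / ENNReal.ofReal (Real.log h ^ r))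
      atTop ≤ ENNReal.ofReal (I⁻¹ ^ r) := by
  refine ge_of_tendsto (x := 𝓝[<] I)
    ((continuousAt_ofReal_inv_rpow r hI).mono_left nhdsWithin_le_nhds) ?_
  filter_upwards [Ioo_mem_nhdsLT hI] with a ⟨ha, haI⟩
  exact M.limsup_iSup_riskPow_SR_le_of_leftTailSum hr ha (hL.leftTailSum_ne_top haI)

lemma limsup_criskPow_le_limsup_riskPow {ι : Type*} {l : Filter ι} [l.NeBot] {τ : ι → Ω → ℕ∞}
    {ν : ℕ} (r : ℝ) (c : ι → ℝ≥0∞)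
    (hτ : Tendsto (fun i => M.P ν {ω | (ν : ℕ∞) < τ i ω}) l (𝓝 1)) :
    limsup (fun i => M.criskPow r ν (τ i) / c i) l ≤
      limsup (fun i => M.riskPow r ν (τ i) / c i) l := by
  have hinv : limsup (fun i => (M.P ν {ω | (ν : ℕ∞) < τ i ω})⁻¹) l = 1 := by
    simpa only [inv_one] using (tendsto_inv_iff.2 hτ).limsup_eq
  calc limsup (fun i => M.criskPow r ν (τ i) / c i) l
      = limsup ((fun i => M.riskPow r ν (τ i) / c i) *
          fun i => (M.P ν {ω | (ν : ℕ∞) < τ i ω})⁻¹) l := by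
        congr 1 with i
        rw [criskPow, ENNReal.div_right_comm, div_eq_mul_inv _ (M.P ν _), Pi.mul_apply]
    _ ≤ _ := by
        simpa only [hinv, mul_one] using ENNReal.limsup_mul_le'
          (u := fun i => M.riskPow r ν (τ i) / c i)
          (Or.inr (hinv.trans_ne one_ne_top)) (Or.inr (hinv.trans_ne one_ne_zero))

end UpperBound

section LowerBound

/-- Linear growth of `Z_n^0` at rate at most `I` in `P_0`-probability. Unlike `PmaxCond`, only
the value at time `n` is constrained, not the running maximum; `c` is `I (1 + ε)`. -/
def RightTailCond (I : ℝ) : Prop :=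
  ∀ c : ℝ, I < c → Tendsto (fun n : ℕ => M.P 0 {ω | c * n ≤ M.Z n 0 ω}) atTop (𝓝 0)

lemma tendsto_P_zero_SR_le_floor {I a : ℝ} (hI : 0 ≤ I) (hR : M.RightTailCond I) (hIa : I < a) :
    Tendsto (fun h : ℝ => M.P 0 {ω | M.SR h ω ≤ ⌊a⁻¹ * Real.log h⌋₊}) atTop (𝓝 0) := by
  obtain ⟨c, hIc, hca⟩ := exists_between hIa
  have hfloor := tendsto_floor_mul_log_atTop (inv_pos.2 (hI.trans_lt hIa))
  have hsum := ((hR c hIc).comp hfloor).add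
    (tendsto_ofReal_exp_mul_floor_mul_sq_div (hI.trans hIc.le) hca)
  rw [add_zero] at hsum
  refine tendsto_of_tendsto_of_tendsto_of_le_of_le' tendsto_const_nhds hsum
    (Eventually.of_forall fun _ => zero_le) ?_
  filter_upwards [eventually_gt_atTop 0, hfloor.eventually_gt_atTop 0] with h hh hm
  refine (M.P_le_P_le_Z_add hm (c * ⌊a⁻¹ * Real.log h⌋₊) (M.measurableSet_F_SR_le h _)).trans ?_
  exact add_le_add_right (mul_le_mul_right (M.Pinf_SR_le hh _) _) _

lemma le_liminf_riskPow_zero_of_lt {r I a : ℝ} (hI : 0 ≤ I) (hr : 0 ≤ r)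
    (hR : M.RightTailCond I) (hIa : I < a) :
    ENNReal.ofReal (a⁻¹ ^ r) ≤ liminf (fun h : ℝ =>
      M.riskPow r 0 (M.SR h) / ENNReal.ofReal (Real.log h ^ r)) atTop := by
  have hdelay : Tendsto (fun h : ℝ => M.P 0 {ω | (⌊a⁻¹ * Real.log h⌋₊ : ℕ∞) < M.SR h ω}) atTop
      (𝓝 1) := by
    simpa only [compl_ofPred, not_le] using tendsto_measure_compl_one
      (fun h => M.measurableSet_SR_le h _) (M.tendsto_P_zero_SR_le_floor hI hR hIa)
  have hlower := ENNReal.Tendsto.mul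
    (tendsto_natCast_rpow_div_ofReal_rpow hr eventually_log_pos
      (tendsto_floor_mul_log_div_log (inv_nonneg.2 (hI.trans hIa.le))))
    (Or.inr one_ne_top) hdelay (Or.inl one_ne_zero)
  rw [mul_one] at hlower
  rw [← hlower.liminf_eq]
  refine liminf_le_liminf (Eventually.of_forall fun h => ?_)
  rw [← ENNReal.mul_div_right_comm]
  refine ENNReal.div_le_div_right ?_ _
  simpa only [riskPow, Nat.cast_zero, tsub_zero] using
    natCast_rpow_mul_measure_lt_le_lintegral (M.P 0) (M.measurable_SR h) hr _

lemma le_liminf_riskPow_zero {r I : ℝ} (hI : 0 < I) (hr : 0 ≤ r) (hR : M.RightTailCond I) :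
    ENNReal.ofReal (I⁻¹ ^ r) ≤ liminf (fun h : ℝ =>
      M.riskPow r 0 (M.SR h) / ENNReal.ofReal (Real.log h ^ r)) atTop := by
  refine le_of_tendsto (x := 𝓝[>] I)
    ((continuousAt_ofReal_inv_rpow r hI).mono_left nhdsWithin_le_nhds) ?_
  filter_upwards [self_mem_nhdsWithin] with a hIa
  exact M.le_liminf_riskPow_zero_of_lt hI.le hr hR hIa

end LowerBound

section SufficientConditions

variable {M}

lemma PmaxCond.rightTailCond {I : ℝ} (hI : 0 < I) (hP : M.PmaxCond I) : M.RightTailCond I := by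
  intro c hc
  have hε : I * (1 + (c / I - 1)) = c := by field_simp; ring
  refine tendsto_of_tendsto_of_tendsto_of_le_of_le' tendsto_const_nhds
    (hP (c / I - 1) (sub_pos.2 ((one_lt_div hI).2 hc))) (Eventually.of_forall fun _ => zero_le) ?_
  filter_upwards [eventually_ge_atTop 1] with N hN
  exact measure_mono fun ω hω => ⟨N, hN, le_rfl, by rwa [hε]⟩

lemma CondAr.leftTailCond {r I : ℝ} (hA : M.CondAr r I) : M.LeftTailCond r I := by
  intro ε hε
  refine lt_of_le_of_lt (ENNReal.tsum_le_tsum fun n => ?_) (hA ε hε)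
  refine mul_le_mul_right (iSup_mono fun ν => measure_mono fun ω hω => ?_) _
  rw [mem_ofPred_eq] at hω ⊢
  exact lt_abs.2 (Or.inr (by linarith))

lemma CondAr.rightTailCond {r I : ℝ} (hr : 1 ≤ r) (hA : M.CondAr r I) : M.RightTailCond I := by
  intro c hc
  rw [← tendsto_add_atTop_iff_nat 1]
  have hterm := ENNReal.tendsto_atTop_zero_of_tsum_ne_top (hA ((c - I) / 2) (by linarith)).ne
  refine tendsto_of_tendsto_of_tendsto_of_le_of_le tendsto_const_nhds hterm
    (fun _ => zero_le) fun n => ?_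
  have hweight : 1 ≤ ENNReal.ofReal ((n + 1 : ℝ) ^ (r - 1)) :=
    ENNReal.one_le_ofReal.2 (Real.one_le_rpow (by simp) (sub_nonneg.2 hr))
  have htail : {ω | c * ((n + 1 : ℕ) : ℝ) ≤ M.Z (n + 1) 0 ω} ⊆
      {ω | (c - I) / 2 < |M.Z (0 + (n + 1)) 0 ω / (n + 1) - I|} := by
    intro ω hω
    have hratio : c ≤ M.Z (0 + (n + 1)) 0 ω / (n + 1) := by
      rw [le_div_iff₀ (by positivity), zero_add]
      exact_mod_cast hω
    rw [mem_ofPred_eq]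
    exact lt_abs.2 (Or.inl (by linarith))
  calc M.P 0 {ω | c * ((n + 1 : ℕ) : ℝ) ≤ M.Z (n + 1) 0 ω}
      ≤ ⨆ k, M.P k {ω | (c - I) / 2 < |M.Z (k + (n + 1)) k ω / (n + 1) - I|} :=
        (measure_mono htail).trans
          (le_iSup (fun k => M.P k {ω | (c - I) / 2 < |M.Z (k + (n + 1)) k ω / (n + 1) - I|}) 0)
    _ ≤ _ := le_mul_of_one_le_left zero_le hweight

lemma CondA2.condAr_one {I : ℝ} (hA : M.CondA2 I) : M.CondAr 1 I := fun ε hε => by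
  simpa only [sub_self, Real.rpow_zero, ENNReal.ofReal_one, one_mul] using hA ε hε

end SufficientConditions

end ChangePointModel

theorem statement13_general {Ω : Type} [MeasurableSpace Ω] (M : ChangePointModel Ω) {r I : ℝ}
    (hI : 0 < I) (hr : 0 < r) (hR : M.RightTailCond I) (hL : M.LeftTailCond r I) :
    M.ThreeRelations r I := by
  have hsup := M.limsup_iSup_riskPow_SR_le hI hr hL
  have hrisk : ∀ ν, limsup (fun h : ℝ => M.riskPow r ν (M.SR h) / ENNReal.ofReal (Real.log h ^ r))
      atTop ≤ ENNReal.ofReal (I⁻¹ ^ r) := fun ν =>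
    (limsup_le_limsup (Eventually.of_forall fun h => ENNReal.div_le_div_right
      (le_iSup (fun ν => M.riskPow r ν (M.SR h)) ν) _)).trans hsup
  have hinf : ENNReal.ofReal (I⁻¹ ^ r) ≤ liminf (fun h : ℝ =>
      (⨆ ν, M.riskPow r ν (M.SR h)) / ENNReal.ofReal (Real.log h ^ r)) atTop :=
    (M.le_liminf_riskPow_zero hI hr.le hR).trans (liminf_le_liminf (Eventually.of_forall fun h =>
      ENNReal.div_le_div_right (le_iSup (fun ν => M.riskPow r ν (M.SR h)) 0) _))
  rw [ChangePointModel.ThreeRelations, one_div, ← Real.inv_rpow hI.le]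
  exact ⟨hrisk, fun ν => (M.limsup_criskPow_le_limsup_riskPow r _ (M.tendsto_P_lt_SR ν)).trans
    (hrisk ν), tendsto_of_le_liminf_of_limsup_le hinf hsup⟩

/-- (i) If for some `I ∈ (0,∞)` and `r ≥ 1` the conditions `PmaxCond` and
the left-tail uniform `r`-complete convergence hold, then the three asymptotic relations for
the SR procedure `T(h)` as `h → ∞` hold. (ii) They also hold under the two-sided uniform
`r`-complete convergence condition. (iii) In particular, for `r = 1` they hold under (A2). -/
theorem statement13
    {Ω : Type} [m0 : MeasurableSpace Ω] (M : ChangePointModel Ω)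
    (I : ℝ) (hI : 0 < I) :
    (∀ r : ℝ, 1 ≤ r → M.PmaxCond I → M.LeftTailCond r I → M.ThreeRelations r I) ∧
    (∀ r : ℝ, 1 ≤ r → M.CondAr r I → M.ThreeRelations r I) ∧
    (M.CondA2 I → M.ThreeRelations 1 I) := by
  refine ⟨fun r hr hP hL => ?_, fun r hr hA => ?_, fun hA => ?_⟩
  · exact statement13_general M hI (by linarith) (hP.rightTailCond hI) hL
  · exact statement13_general M hI (by linarith) (hA.rightTailCond hr) hA.leftTailCond
  · exact statement13_general M hI one_pos (hA.condAr_one.rightTailCond le_rfl)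
      hA.condAr_one.leftTailCond
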